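/- ε-Converse theorem (Theorem 5.2). Let V = {Vⁿ} be a general source, W = {Wⁿ} a general channel, and 0 ≤ ε < 1, and suppose V is ε-transmissible over W. Then there exists a channel input X = {Xⁿ} (possibly correlated with the source) such that for every sequence {γₙ} with γₙ > 0, γₙ → 0, nγₙ → ∞, it holds that limsupₙ Pr{ (1/n) log( Wⁿ(Yⁿ|Xⁿ)/P_{Yⁿ}(Yⁿ) ) ≤ (1/n) log( 1/P_{Vⁿ}(Vⁿ) ) − γₙ } ≤ ε, where Yⁿ is the channel output due to input Xⁿ. -/

import Mathlib

/-!
Among the outcomes decoded correctly, those with `P_V(v) W(y|x) ≤ c Q(y)` have probability at most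
`c`, for every pmf `Q` on the output words: factor the input law as `P_V(v) P_{X|V}(x|v)`; then each
such outcome `(v, x, y)` has probability at most `c Q(y) P_{X|V}(x|ψ(y))`, and summing over `(x, y)`
gives at most `c`. With `Q` the output law and `c = exp(-nγₙ)`, which tends to `0`, these are the
outcomes of the event of the theorem that are decoded correctly; the others are decoding errors.
-/

open Filter Real Topology

namespace ISC

/-- Words of length `n` over alphabet `A`. -/
abbrev Word (A : Type*) (n : ℕ) : Type _ := Fin n → A

/-- `p` is a probability mass function. -/
def IsPMF {α : Type*} (p : α → ℝ) : Prop :=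
  (∀ a, 0 ≤ p a) ∧ HasSum p 1

/-- Probability of the event `S` under the pmf `p`. -/
noncomputable def prob {α : Type*} (p : α → ℝ) (S : Set α) : ℝ :=
  ∑' a, S.indicator p a

/-- Output marginal `P_{Yⁿ}` of the channel `W` fed with the joint input law `P_{VⁿXⁿ}`. -/
noncomputable def outDist {𝒱 𝒳 𝒴 : Type*} {n : ℕ}
    (PVX : Word 𝒱 n × Word 𝒳 n → ℝ) (W : Word 𝒳 n → Word 𝒴 n → ℝ)
    (y : Word 𝒴 n) : ℝ :=
  ∑' vx : Word 𝒱 n × Word 𝒳 n, PVX vx * W vx.2 y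

/-- Joint law of `(Vⁿ, Xⁿ, Yⁿ)`: `P_{VⁿXⁿ}(v,x) · Wⁿ(y|x)`. -/
noncomputable def jointLaw {𝒱 𝒳 𝒴 : Type*} {n : ℕ}
    (PVX : Word 𝒱 n × Word 𝒳 n → ℝ) (W : Word 𝒳 n → Word 𝒴 n → ℝ) :
    Word 𝒱 n × Word 𝒳 n × Word 𝒴 n → ℝ :=
  fun z => PVX (z.1, z.2.1) * W z.2.1 z.2.2

/-- The joint input law `P_{VⁿXⁿ}` induced by the deterministic encoder `φ`:
`P_{Vⁿ}(v) 1{x = φ(v)}`. -/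
noncomputable def codeInput {𝒱 𝒳 : Type*} [DecidableEq 𝒳] {n : ℕ} (PV : Word 𝒱 n → ℝ)
    (φ : Word 𝒱 n → Word 𝒳 n) : Word 𝒱 n × Word 𝒳 n → ℝ :=
  fun vx => if vx.2 = φ vx.1 then PV vx.1 else 0

/-- Error probability `εₙ` of the joint source-channel code `(φ, ψ)`. -/
noncomputable def errProb {𝒱 𝒳 𝒴 : Type*} {n : ℕ}
    (PV : Word 𝒱 n → ℝ) (W : Word 𝒳 n → Word 𝒴 n → ℝ)
    (φ : Word 𝒱 n → Word 𝒳 n) (ψ : Word 𝒴 n → Word 𝒱 n) : ℝ :=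
  ∑' v, PV v * prob (W (φ v)) {y | ψ y ≠ v}

/-- `V` is transmissible over `W`. -/
def Transmissible {𝒱 𝒳 𝒴 : Type*} (PV : (n : ℕ) → Word 𝒱 n → ℝ)
    (W : (n : ℕ) → Word 𝒳 n → Word 𝒴 n → ℝ) : Prop :=
  ∃ (φ : (n : ℕ) → Word 𝒱 n → Word 𝒳 n) (ψ : (n : ℕ) → Word 𝒴 n → Word 𝒱 n),
    Tendsto (fun n => errProb (PV n) (W n) (φ n) (ψ n)) atTop (nhds 0)

/-- Output marginal of the channel `W` for an input distribution `P_{Xⁿ}`. -/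
noncomputable def outDistX {𝒳 𝒴 : Type*} {n : ℕ}
    (PX : Word 𝒳 n → ℝ) (W : Word 𝒳 n → Word 𝒴 n → ℝ) (y : Word 𝒴 n) : ℝ :=
  ∑' x : Word 𝒳 n, PX x * W x y

/-- Joint law of `(Xⁿ, Yⁿ)`: `P_{Xⁿ}(x) · Wⁿ(y|x)`. -/
noncomputable def jointXY {𝒳 𝒴 : Type*} {n : ℕ}
    (PX : Word 𝒳 n → ℝ) (W : Word 𝒳 n → Word 𝒴 n → ℝ) :
    Word 𝒳 n × Word 𝒴 n → ℝ :=
  fun z => PX z.1 * W z.1 z.2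

/-- Limit superior in probability of a sequence of random variables `Z i`
distributed according to the pmfs `p i`. -/
noncomputable def plimsup {α : ℕ → Type*} (p : (i : ℕ) → α i → ℝ)
    (Z : (i : ℕ) → α i → ℝ) : EReal :=
  sInf {β : EReal |
    Tendsto (fun i => prob (p i) {a | β < (Z i a : EReal)}) atTop (nhds 0)}

/-- Limit inferior in probability of a sequence of random variables `Z i`
distributed according to the pmfs `p i`. -/
noncomputable def pliminf {α : ℕ → Type*} (p : (i : ℕ) → α i → ℝ)
    (Z : (i : ℕ) → α i → ℝ) : EReal :=
  sSup {β : EReal |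
    Tendsto (fun i => prob (p i) {a | (Z i a : EReal) < β}) atTop (nhds 0)}

/-- Spectral sup-entropy rate `H̄(V)`. -/
noncomputable def Hbar {𝒱 : Type*} (PV : (n : ℕ) → Word 𝒱 n → ℝ) : EReal :=
  plimsup (fun n => PV n) (fun n v => (1 / (n : ℝ)) * Real.log (1 / PV n v))

/-- Spectral inf-entropy rate `H_(V)`. -/
noncomputable def Hlow {𝒱 : Type*} (PV : (n : ℕ) → Word 𝒱 n → ℝ) : EReal :=
  pliminf (fun n => PV n) (fun n v => (1 / (n : ℝ)) * Real.log (1 / PV n v))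

/-- Spectral inf-information rate `I_(X;Y)` of the channel `W` with input `X`. -/
noncomputable def Ilow {𝒳 𝒴 : Type*} (PX : (n : ℕ) → Word 𝒳 n → ℝ)
    (W : (n : ℕ) → Word 𝒳 n → Word 𝒴 n → ℝ) : EReal :=
  pliminf (fun n => jointXY (PX n) (W n))
    (fun n z => (1 / (n : ℝ)) * Real.log (W n z.1 z.2 / outDistX (PX n) (W n) z.2))

/-- Spectral sup-information rate `Ī(X;Y)` of the channel `W` with input `X`. -/
noncomputable def Ihigh {𝒳 𝒴 : Type*} (PX : (n : ℕ) → Word 𝒳 n → ℝ)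
    (W : (n : ℕ) → Word 𝒳 n → Word 𝒴 n → ℝ) : EReal :=
  plimsup (fun n => jointXY (PX n) (W n))
    (fun n z => (1 / (n : ℝ)) * Real.log (W n z.1 z.2 / outDistX (PX n) (W n) z.2))

/-- `sup_X I_(X;Y)`: the supremum over all channel inputs. -/
noncomputable def supIlow {𝒳 𝒴 : Type*}
    (W : (n : ℕ) → Word 𝒳 n → Word 𝒴 n → ℝ) : EReal :=
  ⨆ PX : {PX : (n : ℕ) → Word 𝒳 n → ℝ // ∀ n, IsPMF (PX n)}, Ilow PX.1 W

lemma mul_le_exp_mul_of_log_div_le {p w q r γ : ℝ} (hp : 0 < p) (hw : 0 < w) (hq : 0 < q)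
    (hr : 0 < r) (h : 1 / r * log (w / q) ≤ 1 / r * log (1 / p) - γ) :
    p * w ≤ exp (-(r * γ)) * q := by
  have hlog : log (w / q) ≤ log (1 / p) - r * γ := by
    field_simp at h
    linarith
  have hdiv : w / q ≤ exp (-(r * γ)) / p :=
    calc w / q ≤ exp (log (1 / p) - r * γ) := (log_le_iff_le_exp (div_pos hw hq)).1 hlog
      _ = exp (-(r * γ)) / p := by
        rw [sub_eq_neg_add, exp_add, exp_log (one_div_pos.2 hp), mul_one_div]
  rw [div_le_div_iff₀ hq hp] at hdiv
  linarith

lemma limsup_le_limsup_of_le_add_tendsto_zero {ι : Type*} {l : Filter ι} [l.NeBot]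
    {u v w : ι → ℝ} (hu : l.IsCoboundedUnder (· ≤ ·) u) (hv : l.IsBoundedUnder (· ≤ ·) v)
    (hv' : l.IsBoundedUnder (· ≥ ·) v) (hw : Tendsto w l (𝓝 0)) (h : u ≤ᶠ[l] v + w) :
    limsup u l ≤ limsup v l :=
  calc limsup u l
    _ ≤ limsup (v + w) l := limsup_le_limsup h hu (isBoundedUnder_le_add hv hw.isBoundedUnder_le)
    _ ≤ limsup v l + limsup w l :=
      limsup_add_le hv' hv hw.isCoboundedUnder_le hw.isBoundedUnder_le
    _ = limsup v l := by rw [hw.limsup_eq, add_zero]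

section Summation

variable {α β : Type*}

lemma hasSum_prod_of_nonneg {f : α × β → ℝ} (hf : ∀ z, 0 ≤ f z) {g : α → ℝ}
    (hfib : ∀ a, HasSum (fun b => f (a, b)) (g a)) {s : ℝ} (hg : HasSum g s) : HasSum f s := by
  have hsum : Summable f := by
    refine (summable_prod_of_nonneg hf).2 ⟨fun a => (hfib a).summable, ?_⟩
    simpa only [fun a => (hfib a).tsum_eq] using hg.summable
  exact (hsum.hasSum.prod_fiberwise hfib).unique hg ▸ hsum.hasSum

lemma exists_le_hasSum_mul {q : α → ℝ} (hq : ∀ a, 0 ≤ q a) {s : ℝ} (hqs : HasSum q s)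
    {k : α → β → ℝ} (hk : ∀ a b, 0 ≤ k a b) (hksum : ∀ a, Summable (k a))
    (hk1 : ∀ a, ∑' b, k a b ≤ 1) :
    ∃ t ≤ s, HasSum (fun z : α × β => q z.1 * k z.1 z.2) t := by
  have hle a : q a * ∑' b, k a b ≤ q a := mul_le_of_le_one_right (hq a) (hk1 a)
  have hsum : Summable fun a => q a * ∑' b, k a b :=
    hqs.summable.of_nonneg_of_le (fun a => mul_nonneg (hq a) (tsum_nonneg (hk a))) hle
  exact ⟨_, hasSum_le hle hsum.hasSum hqs,
    hasSum_prod_of_nonneg (fun z => mul_nonneg (hq z.1) (hk z.1 z.2))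
      (fun a => (hksum a).hasSum.mul_left (q a)) hsum.hasSum⟩

end Summation

section Prob

variable {α : Type*} {p : α → ℝ}

lemma prob_nonneg (hp : ∀ a, 0 ≤ p a) (S : Set α) : 0 ≤ prob p S :=
  tsum_nonneg fun _ => Set.indicator_nonneg (fun a _ => hp a) _

lemma IsPMF.prob_le_one (hp : IsPMF p) (S : Set α) : prob p S ≤ 1 :=
  hasSum_le (Set.indicator_le_self' fun a _ => hp.1 a) (hp.2.summable.indicator S).hasSum hp.2

lemma IsPMF.prob_mono_of_support (hp : IsPMF p) {S T : Set α}
    (h : ∀ a ∈ S, p a ≠ 0 → a ∈ T) : prob p S ≤ prob p T := by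
  have hT a : 0 ≤ T.indicator p a := Set.indicator_nonneg (fun b _ => hp.1 b) a
  refine (hp.2.summable.indicator S).tsum_le_tsum
    (Set.indicator_le' (fun a haS => ?_) fun a _ => hT a) (hp.2.summable.indicator T)
  by_cases hpa : p a = 0
  · exact hpa.trans_le (hT a)
  · exact (Set.indicator_of_mem (h a haS hpa) p).ge

lemma IsPMF.prob_inter_add_prob_diff (hp : IsPMF p) (S T : Set α) :
    prob p (S ∩ T) + prob p (S \ T) = prob p S := by
  rw [prob, prob, ← (hp.2.summable.indicator _).tsum_add (hp.2.summable.indicator _)]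
  refine tsum_congr fun a => ?_
  by_cases haT : a ∈ T <;> by_cases haS : a ∈ S <;> simp [haT, haS]

lemma IsPMF.prob_le_of_injOn (hp : IsPMF p) {β : Type*} {S : Set α} {f : α → β}
    (hf : Set.InjOn f S) {g : β → ℝ} (hg : ∀ b, 0 ≤ g b) {s : ℝ} (hgs : HasSum g s)
    (hle : ∀ a ∈ S, p a ≤ g (f a)) : prob p S ≤ s := by
  rw [prob, ← tsum_subtype]
  exact hasSum_le_inj (S.domRestrict f) hf.injective (fun b _ => hg b) (fun a => hle a a.2)
    (hp.2.summable.subtype S).hasSum hgs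

end Prob

section CondLaw

variable {α β : Type*}

/-- Conditional law `P_{B|A}(b|a)` of the joint law `p` on `α × β`. It is identically zero, hence
not a pmf, at those `a` whose marginal probability vanishes. -/
noncomputable def condLaw (p : α × β → ℝ) (a : α) (b : β) : ℝ :=
  p (a, b) / ∑' b', p (a, b')

variable {p : α × β → ℝ}

lemma condLaw_nonneg (hp : ∀ z, 0 ≤ p z) (a : α) (b : β) : 0 ≤ condLaw p a b :=
  div_nonneg (hp _) (tsum_nonneg fun _ => hp _)

lemma summable_condLaw (hp : Summable p) (a : α) : Summable (condLaw p a) :=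
  (hp.prod_factor a).div_const _

lemma tsum_condLaw_le_one (p : α × β → ℝ) (a : α) : ∑' b, condLaw p a b ≤ 1 := by
  simp only [condLaw, tsum_div_const]
  exact div_self_le_one _

lemma tsum_mul_condLaw (hp : ∀ z, 0 ≤ p z) (hsum : Summable p) (a : α) (b : β) :
    (∑' b', p (a, b')) * condLaw p a b = p (a, b) := by
  have hle : p (a, b) ≤ ∑' b', p (a, b') :=
    (hsum.prod_factor a).le_tsum b fun b' _ => hp (a, b')
  exact mul_div_cancel_of_imp' fun h0 => le_antisymm (hle.trans_eq h0) (hp _)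

end CondLaw

section Channel

variable {𝒱 𝒳 𝒴 : Type*} {n : ℕ} {PVX : Word 𝒱 n × Word 𝒳 n → ℝ} {W : Word 𝒳 n → Word 𝒴 n → ℝ}

lemma hasSum_input_mul_channel (hPVX : IsPMF PVX) (hW : ∀ x, IsPMF (W x)) :
    HasSum (fun z : (Word 𝒱 n × Word 𝒳 n) × Word 𝒴 n => PVX z.1 * W z.1.2 z.2) 1 :=
  hasSum_prod_of_nonneg (fun z => mul_nonneg (hPVX.1 _) ((hW _).1 _))
    (fun vx => by simpa only [mul_one] using (hW vx.2).2.mul_left (PVX vx)) hPVX.2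

lemma IsPMF.jointLaw (hPVX : IsPMF PVX) (hW : ∀ x, IsPMF (W x)) : IsPMF (jointLaw PVX W) :=
  ⟨fun _ => mul_nonneg (hPVX.1 _) ((hW _).1 _),
    (Equiv.prodAssoc _ _ _).hasSum_iff.1 (hasSum_input_mul_channel hPVX hW)⟩

lemma hasSum_outDist (hPVX : IsPMF PVX) (hW : ∀ x, IsPMF (W x)) (y : Word 𝒴 n) :
    HasSum (fun vx => PVX vx * W vx.2 y) (outDist PVX W y) :=
  ((hasSum_input_mul_channel hPVX hW).summable.prod_symm.prod_factor y).hasSum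

lemma IsPMF.outDist (hPVX : IsPMF PVX) (hW : ∀ x, IsPMF (W x)) : IsPMF (outDist PVX W) := by
  refine ⟨fun y => (hasSum_outDist hPVX hW y).nonneg fun vx =>
    mul_nonneg (hPVX.1 vx) ((hW vx.2).1 y), ?_⟩
  exact ((Equiv.prodComm _ _).hasSum_iff.2 (hasSum_input_mul_channel hPVX hW)).prod_fiberwise
    (hasSum_outDist hPVX hW)

lemma jointLaw_le_outDist (hPVX : IsPMF PVX) (hW : ∀ x, IsPMF (W x))
    (z : Word 𝒱 n × Word 𝒳 n × Word 𝒴 n) : jointLaw PVX W z ≤ outDist PVX W z.2.2 :=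
  le_hasSum (hasSum_outDist hPVX hW z.2.2) (z.1, z.2.1) fun vx _ =>
    mul_nonneg (hPVX.1 vx) ((hW vx.2).1 z.2.2)

lemma prob_jointLaw_eq_tsum (hPVX : IsPMF PVX) (hW : ∀ x, IsPMF (W x))
    (S : Set (Word 𝒱 n × Word 𝒳 n × Word 𝒴 n)) :
    prob (jointLaw PVX W) S =
      ∑' vx, PVX vx * prob (W vx.2) {y | (vx.1, vx.2, y) ∈ S} := by
  have hsum := (Equiv.prodAssoc _ _ _).summable_iff.2 ((hPVX.jointLaw hW).2.summable.indicator S)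
  rw [prob, ← (Equiv.prodAssoc _ _ _).tsum_eq]
  refine hsum.tsum_prod.trans (tsum_congr fun vx => ?_)
  rw [prob, ← tsum_mul_left]
  refine tsum_congr fun y => ?_
  by_cases hS : (vx.1, vx.2, y) ∈ S <;> simp [hS, jointLaw]

end Channel

section CodeInput

variable {𝒱 𝒳 𝒴 : Type*} [DecidableEq 𝒳] {n : ℕ}

lemma hasSum_codeInput (PV : Word 𝒱 n → ℝ) (φ : Word 𝒱 n → Word 𝒳 n) (v : Word 𝒱 n) :
    HasSum (fun x => codeInput PV φ (v, x)) (PV v) :=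
  hasSum_ite_eq (φ v) (PV v)

lemma IsPMF.codeInput {PV : Word 𝒱 n → ℝ} (hPV : IsPMF PV) (φ : Word 𝒱 n → Word 𝒳 n) :
    IsPMF (codeInput PV φ) := by
  have hnonneg vx : 0 ≤ ISC.codeInput PV φ vx := ite_nonneg (hPV.1 _) le_rfl
  exact ⟨hnonneg, hasSum_prod_of_nonneg hnonneg (hasSum_codeInput PV φ) hPV.2⟩

lemma tsum_codeInput_mul (PV : Word 𝒱 n → ℝ) (φ : Word 𝒱 n → Word 𝒳 n)
    (f : Word 𝒱 n × Word 𝒳 n → ℝ) :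
    ∑' vx, codeInput PV φ vx * f vx = ∑' v, PV v * f (v, φ v) := by
  have hinj : Function.Injective fun v => (v, φ v) := fun _ _ h => congrArg Prod.fst h
  rw [← hinj.tsum_eq]
  · simp only [codeInput, if_true]
  · rintro ⟨v, x⟩ hvx
    have hx : x = φ v := by
      by_contra hne
      simp [codeInput, hne] at hvx
    exact ⟨v, by rw [hx]⟩

lemma prob_jointLaw_codeInput_error {PV : Word 𝒱 n → ℝ} (hPV : IsPMF PV)
    {W : Word 𝒳 n → Word 𝒴 n → ℝ} (hW : ∀ x, IsPMF (W x)) (φ : Word 𝒱 n → Word 𝒳 n)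
    (ψ : Word 𝒴 n → Word 𝒱 n) :
    prob (jointLaw (codeInput PV φ) W) {z | ψ z.2.2 ≠ z.1} = errProb PV W φ ψ := by
  rw [prob_jointLaw_eq_tsum (hPV.codeInput φ) hW]
  exact tsum_codeInput_mul PV φ fun vx => prob (W vx.2) {y | ψ y ≠ vx.1}

end CodeInput

section Converse

variable {𝒱 𝒳 𝒴 : Type*} {n : ℕ} {PV : Word 𝒱 n → ℝ} {PVX : Word 𝒱 n × Word 𝒳 n → ℝ}
  {W : Word 𝒳 n → Word 𝒴 n → ℝ}

lemma prob_jointLaw_le_mul_inter_correct_le (hPVX : IsPMF PVX)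
    (hmarg : ∀ v, ∑' x, PVX (v, x) = PV v) (hW : ∀ x, IsPMF (W x)) {Q : Word 𝒴 n → ℝ}
    (hQ : IsPMF Q) (ψ : Word 𝒴 n → Word 𝒱 n) {c : ℝ} (hc : 0 ≤ c) :
    prob (jointLaw PVX W)
      ({z | PV z.1 * W z.2.1 z.2.2 ≤ c * Q z.2.2} ∩ {z | ψ z.2.2 = z.1}) ≤ c := by
  have hcQ y : 0 ≤ c * Q y := mul_nonneg hc (hQ.1 y)
  have hcond v x : 0 ≤ condLaw PVX v x := condLaw_nonneg hPVX.1 v x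
  obtain ⟨t, htc, ht⟩ := exists_le_hasSum_mul hcQ (hQ.2.mul_left c) (fun y => hcond (ψ y))
    (fun y => summable_condLaw hPVX.2.summable (ψ y)) fun y => tsum_condLaw_le_one PVX (ψ y)
  refine ((hPVX.jointLaw hW).prob_le_of_injOn (f := fun z => (z.2.2, z.2.1)) ?_
    (fun yx => mul_nonneg (hcQ yx.1) (hcond _ _)) ht ?_).trans (htc.trans_eq (mul_one c))
  · rintro ⟨v, x, y⟩ ⟨-, hv⟩ ⟨v', x', y'⟩ ⟨-, hv'⟩ heq
    obtain ⟨rfl, rfl⟩ := Prod.mk.inj heq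
    exact congrArg (·, x, y) ((hv : ψ y = v).symm.trans hv')
  · rintro ⟨v, x, y⟩ ⟨hle, hv⟩
    obtain rfl : ψ y = v := hv
    calc jointLaw PVX W (ψ y, x, y)
      _ = PV (ψ y) * W x y * condLaw PVX (ψ y) x := by
        rw [jointLaw, ← tsum_mul_condLaw hPVX.1 hPVX.2.summable, hmarg]
        ring
      _ ≤ c * Q y * condLaw PVX (ψ y) x := mul_le_mul_of_nonneg_right hle (hcond _ _)

lemma prob_jointLaw_le_mul_le (hPVX : IsPMF PVX) (hmarg : ∀ v, ∑' x, PVX (v, x) = PV v)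
    (hW : ∀ x, IsPMF (W x)) {Q : Word 𝒴 n → ℝ} (hQ : IsPMF Q) (ψ : Word 𝒴 n → Word 𝒱 n)
    {c : ℝ} (hc : 0 ≤ c) :
    prob (jointLaw PVX W) {z | PV z.1 * W z.2.1 z.2.2 ≤ c * Q z.2.2} ≤
      prob (jointLaw PVX W) {z | ψ z.2.2 ≠ z.1} + c := by
  have hjoint := hPVX.jointLaw hW
  rw [← hjoint.prob_inter_add_prob_diff _ {z | ψ z.2.2 = z.1}, add_comm]
  exact add_le_add (hjoint.prob_mono_of_support fun z hz _ => hz.2)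
    (prob_jointLaw_le_mul_inter_correct_le hPVX hmarg hW hQ ψ hc)

lemma prob_jointLaw_log_div_outDist_le (hPVX : IsPMF PVX) (hmarg : ∀ v, ∑' x, PVX (v, x) = PV v)
    (hW : ∀ x, IsPMF (W x)) (ψ : Word 𝒴 n → Word 𝒱 n) (hn : 0 < n) (γ : ℝ) :
    prob (jointLaw PVX W)
        {z | (1 / (n : ℝ)) * log (W z.2.1 z.2.2 / outDist PVX W z.2.2) ≤
          (1 / (n : ℝ)) * log (1 / PV z.1) - γ} ≤
      prob (jointLaw PVX W) {z | ψ z.2.2 ≠ z.1} + exp (-(n * γ)) := by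
  have hjoint := hPVX.jointLaw hW
  refine (hjoint.prob_mono_of_support fun z hlog hz => ?_).trans
    (prob_jointLaw_le_mul_le hPVX hmarg hW (hPVX.outDist hW) ψ (exp_nonneg _))
  have hinput : PVX (z.1, z.2.1) ≠ 0 := left_ne_zero_of_mul hz
  have hchannel : W z.2.1 z.2.2 ≠ 0 := right_ne_zero_of_mul hz
  have hsource : 0 < PV z.1 :=
    hmarg z.1 ▸ (hPVX.2.summable.prod_factor z.1).tsum_pos (fun _ => hPVX.1 _) z.2.1
      ((hPVX.1 _).lt_of_ne' hinput)
  have houtput : 0 < outDist PVX W z.2.2 :=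
    ((hjoint.1 z).lt_of_ne' hz).trans_le (jointLaw_le_outDist hPVX hW z)
  exact mul_le_exp_mul_of_log_div_le hsource (((hW _).1 _).lt_of_ne' hchannel) houtput
    (Nat.cast_pos.2 hn) hlog

end Converse

theorem eps_converse_theorem_general {𝒱 𝒳 𝒴 : Type*}
    (PV : (n : ℕ) → Word 𝒱 n → ℝ) (PVX : (n : ℕ) → Word 𝒱 n × Word 𝒳 n → ℝ)
    (hPVX : ∀ n, IsPMF (PVX n)) (hmarg : ∀ n v, ∑' x, PVX n (v, x) = PV n v)
    (W : (n : ℕ) → Word 𝒳 n → Word 𝒴 n → ℝ) (hW : ∀ n x, IsPMF (W n x))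
    (ψ : (n : ℕ) → Word 𝒴 n → Word 𝒱 n) (γ : ℕ → ℝ)
    (hγ : Tendsto (fun n : ℕ => (n : ℝ) * γ n) atTop atTop) :
    limsup (fun n => prob (jointLaw (PVX n) (W n))
        {z | (1 / (n : ℝ)) * log (W n z.2.1 z.2.2 / outDist (PVX n) (W n) z.2.2) ≤
          (1 / (n : ℝ)) * log (1 / PV n z.1) - γ n}) atTop ≤
      limsup (fun n => prob (jointLaw (PVX n) (W n)) {z | ψ n z.2.2 ≠ z.1}) atTop := by
  have hjoint n : IsPMF (jointLaw (PVX n) (W n)) := (hPVX n).jointLaw (hW n)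
  have hbelow (S : (n : ℕ) → Set (Word 𝒱 n × Word 𝒳 n × Word 𝒴 n)) :
      atTop.IsBoundedUnder (· ≥ ·) fun n => prob (jointLaw (PVX n) (W n)) (S n) :=
    isBoundedUnder_of ⟨0, fun n => prob_nonneg (hjoint n).1 (S n)⟩
  refine limsup_le_limsup_of_le_add_tendsto_zero (hbelow _).isCoboundedUnder_le
    (isBoundedUnder_of ⟨1, fun n => (hjoint n).prob_le_one _⟩) (hbelow _)
    (tendsto_exp_neg_atTop_nhds_zero.comp hγ) ?_
  filter_upwards [eventually_gt_atTop 0] with n hn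
  exact prob_jointLaw_log_div_outDist_le (hPVX n) (hmarg n) (hW n) (ψ n) hn (γ n)

/-- **ε-Converse theorem** (Theorem 5.2). -/
theorem eps_converse_theorem
    {𝒱 𝒳 𝒴 : Type} [Countable 𝒱] [Countable 𝒳] [Countable 𝒴]
    (ε : ℝ) (hε0 : 0 ≤ ε) (hε1 : ε < 1)
    (PV : (n : ℕ) → Word 𝒱 n → ℝ) (hPV : ∀ n, IsPMF (PV n))
    (W : (n : ℕ) → Word 𝒳 n → Word 𝒴 n → ℝ) (hW : ∀ n x, IsPMF (W n x))
    (htrans : ∃ (φ : (n : ℕ) → Word 𝒱 n → Word 𝒳 n)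
        (ψ : (n : ℕ) → Word 𝒴 n → Word 𝒱 n),
      Filter.limsup (fun n => errProb (PV n) (W n) (φ n) (ψ n)) atTop ≤ ε) :
    ∃ PVX : (n : ℕ) → Word 𝒱 n × Word 𝒳 n → ℝ,
      (∀ n, IsPMF (PVX n)) ∧
      (∀ n v, (∑' x : Word 𝒳 n, PVX n (v, x)) = PV n v) ∧
      ∀ γ : ℕ → ℝ, (∀ n, 0 < γ n) → Tendsto γ atTop (nhds 0) →
        Tendsto (fun n : ℕ => (n : ℝ) * γ n) atTop atTop →
        Filter.limsup (fun n =>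
          prob (jointLaw (PVX n) (W n))
            {z : Word 𝒱 n × Word 𝒳 n × Word 𝒴 n |
              (1 / (n : ℝ)) * Real.log (W n z.2.1 z.2.2 / outDist (PVX n) (W n) z.2.2) ≤
                (1 / (n : ℝ)) * Real.log (1 / PV n z.1) - γ n}) atTop ≤ ε := by
  classical
  obtain ⟨φ, ψ, hlim⟩ := htrans
  have hinput n : IsPMF (codeInput (PV n) (φ n)) := (hPV n).codeInput (φ n)
  have hmarg n v : ∑' x, codeInput (PV n) (φ n) (v, x) = PV n v :=
    (hasSum_codeInput (PV n) (φ n) v).tsum_eq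
  refine ⟨fun n => codeInput (PV n) (φ n), hinput, hmarg, fun γ _ _ hγ => ?_⟩
  refine (eps_converse_theorem_general PV _ hinput hmarg W hW ψ γ hγ).trans ?_
  simpa only [prob_jointLaw_codeInput_error (hPV _) (hW _)] using hlim

end ISC
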